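/- arXiv:2208.04039 — 5 statements merged into one kernel-verified Lean document; each statement's English description precedes it below -/
import Mathlib

section
/- Let E be a real vector space, 1 < p < ∞, and let 𝒩 be a seminorm on E which is uniformly convex in the following sense: for every ε ∈ (0,2] there exists δ > 0 such that whenever 𝒩(u) = 𝒩(v) = 1 and 𝒩(u − v) ≥ ε, one has 𝒩((u+v)/2) ≤ 1 − δ. Then for every ε ∈ (0,2] there exists δ' > 0 such that whenever 𝒩(u) ≤ 1, 𝒩(v) ≤ 1 and 𝒩(u − v) ≥ ε, one has 𝒩((u+v)/2)^p ≤ (1 − δ') · (𝒩(u)^p + 𝒩(v)^p)/2. -/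
/-!
Let `‖u‖ = a`, `‖v‖ = b` and suppose that `u` and `v` are `ε`-separated relative to `max a b`. The
triangle inequality bounds the norm of their midpoint by `(a + b) / 2`, and uniform convexity bounds
it by `r * max a b` for some `r < 1` depending only on `ε`. The `p`-th power of the smaller bound is
strictly below `(a ^ p + b ^ p) / 2`: for `a ≠ b` by strict convexity of `t ↦ t ^ p`, for `a = b`
because `r < 1`. Since both sides are homogeneous of degree `p`, compactness of
`{(a, b) | 0 ≤ a, 0 ≤ b, max a b = 1}` makes the gap uniform.
-/

section PowerMean

variable {p r : ℝ}

lemma midpoint_rpow_lt (hp : 1 < p) {a b : ℝ} (ha : 0 ≤ a) (hb : 0 ≤ b) (hab : a ≠ b) :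
    ((a + b) / 2) ^ p < (a ^ p + b ^ p) / 2 := by
  have h := (strictConvexOn_rpow hp).2 ha hb hab one_half_pos one_half_pos (add_halves 1)
  simp only [smul_eq_mul, ← mul_add] at h
  simpa only [div_eq_inv_mul, mul_one] using h

lemma min_midpoint_mul_max_rpow_lt (hp : 1 < p) (hr : r ∈ Set.Ico 0 1) {a b : ℝ}
    (ha : 0 ≤ a) (hb : 0 ≤ b) (hab : 0 < max a b) :
    min ((a + b) / 2) (r * max a b) ^ p < (a ^ p + b ^ p) / 2 := by
  have hp0 : 0 < p := zero_lt_one.trans hp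
  have hmin : 0 ≤ min ((a + b) / 2) (r * max a b) :=
    le_min (by positivity) (mul_nonneg hr.1 hab.le)
  obtain rfl | hne := eq_or_ne a b
  · rw [max_self] at hab hmin ⊢
    calc min ((a + a) / 2) (r * a) ^ p < a ^ p :=
          Real.rpow_lt_rpow hmin ((min_le_right _ _).trans_lt (mul_lt_of_lt_one_left hab hr.2)) hp0
      _ = (a ^ p + a ^ p) / 2 := (add_self_div_two _).symm
  · exact (Real.rpow_le_rpow hmin (min_le_left _ _) hp0.le).trans_lt (midpoint_rpow_lt hp ha hb hne)

lemma exists_min_midpoint_rpow_le_of_max_eq_one (hp : 1 < p) (hr : r ∈ Set.Ico 0 1) :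
    ∃ δ > 0, ∀ a b : ℝ, 0 ≤ a → 0 ≤ b → max a b = 1 →
      min ((a + b) / 2) r ^ p ≤ (1 - δ) * ((a ^ p + b ^ p) / 2) := by
  have hp0 : 0 ≤ p := zero_le_one.trans hp.le
  have hK : IsCompact (Set.Icc (0 : ℝ × ℝ) 1 ∩ {x | max x.1 x.2 = 1}) :=
    isCompact_Icc.inter_right (isClosed_eq (by fun_prop) continuous_const)
  have hcont : Continuous fun x : ℝ × ℝ ↦
      (x.1 ^ p + x.2 ^ p) / 2 - min ((x.1 + x.2) / 2) r ^ p := by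
    fun_prop (disch := exact hp0)
  obtain ⟨δ, hδ, hgap⟩ := hK.exists_forall_le' hcont.continuousOn (a := 0) fun x hx ↦ by
    have h := min_midpoint_mul_max_rpow_lt hp hr hx.1.1.1 hx.1.1.2 (hx.2.symm ▸ one_pos)
    rw [hx.2, mul_one] at h
    exact sub_pos.2 h
  refine ⟨δ, hδ, fun a b ha hb hab ↦ ?_⟩
  obtain ⟨ha1, hb1⟩ := max_le_iff.1 hab.le
  have hmean : (a ^ p + b ^ p) / 2 ≤ 1 := by
    linarith [Real.rpow_le_one ha ha1 hp0, Real.rpow_le_one hb hb1 hp0]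
  calc min ((a + b) / 2) r ^ p ≤ (a ^ p + b ^ p) / 2 - δ :=
        le_sub_comm.1 (hgap (a, b) ⟨⟨⟨ha, hb⟩, ha1, hb1⟩, hab⟩)
    _ ≤ (a ^ p + b ^ p) / 2 - δ * ((a ^ p + b ^ p) / 2) :=
        sub_le_sub_left (mul_le_of_le_one_right hδ.le hmean) _
    _ = (1 - δ) * ((a ^ p + b ^ p) / 2) := (one_sub_mul _ _).symm

lemma exists_min_midpoint_mul_max_rpow_le (hp : 1 < p) (hr : r ∈ Set.Ico 0 1) :
    ∃ δ > 0, ∀ a b : ℝ, 0 ≤ a → 0 ≤ b →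
      min ((a + b) / 2) (r * max a b) ^ p ≤ (1 - δ) * ((a ^ p + b ^ p) / 2) := by
  obtain ⟨δ, hδ, h⟩ := exists_min_midpoint_rpow_le_of_max_eq_one hp hr
  refine ⟨δ, hδ, fun a b ha hb ↦ ?_⟩
  obtain hM | hM := (le_max_of_le_left ha : 0 ≤ max a b).eq_or_lt
  · obtain rfl : a = 0 := ha.antisymm' (hM ▸ le_max_left a b)
    obtain rfl : b = 0 := hb.antisymm' (hM ▸ le_max_right 0 b)
    simp [Real.zero_rpow (zero_lt_one.trans hp).ne']
  · set M := max a b with hM_def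
    have hnorm : max (a / M) (b / M) = 1 := by
      rw [max_div_div_right hM.le, ← hM_def, div_self hM.ne']
    have hscale : min ((a + b) / 2) (r * M) = min ((a / M + b / M) / 2) r * M := by
      rw [min_mul_of_nonneg _ _ hM.le]
      congr 1
      field_simp
    have hmin : 0 ≤ min ((a / M + b / M) / 2) r := le_min (by positivity) hr.1
    calc min ((a + b) / 2) (r * M) ^ p = min ((a / M + b / M) / 2) r ^ p * M ^ p := by
          rw [hscale, Real.mul_rpow hmin hM.le]
      _ ≤ (1 - δ) * (((a / M) ^ p + (b / M) ^ p) / 2) * M ^ p := by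
          gcongr
          exact h _ _ (by positivity) (by positivity) hnorm
      _ = (1 - δ) * ((a ^ p + b ^ p) / 2) := by
          rw [Real.div_rpow ha hM.le, Real.div_rpow hb hM.le]
          have := (Real.rpow_pos_of_pos hM p).ne'
          field_simp

end PowerMean

section UniformConvexSpace

variable {E : Type*} [SeminormedAddCommGroup E] [NormedSpace ℝ E]

lemma norm_half_smul (x : E) : ‖(1 / 2 : ℝ) • x‖ = ‖x‖ / 2 := by
  rw [norm_smul_of_nonneg one_half_pos.le, one_div_mul_eq_div]

lemma uniformConvexSpace_of_norm_midpoint_le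
    (h : ∀ ε ∈ Set.Ioc (0 : ℝ) 2, ∃ δ > (0 : ℝ), ∀ u v : E,
      ‖u‖ = 1 → ‖v‖ = 1 → ε ≤ ‖u - v‖ → ‖(1 / 2 : ℝ) • (u + v)‖ ≤ 1 - δ) :
    UniformConvexSpace E where
  uniform_convex ε hε := by
    obtain ⟨δ, hδ, hmid⟩ := h (min ε 2) ⟨lt_min hε two_pos, min_le_right _ _⟩
    refine ⟨2 * δ, by positivity, fun u hu v hv huv ↦ ?_⟩
    have := hmid u v hu hv ((min_le_left _ _).trans huv)
    rw [norm_half_smul] at this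
    linarith

variable (E) [UniformConvexSpace E] {ε : ℝ}

lemma exists_norm_midpoint_le_mul_max (hε : 0 < ε) :
    ∃ r ∈ Set.Ico (0 : ℝ) 1, ∀ u v : E, ε * max ‖u‖ ‖v‖ ≤ ‖u - v‖ →
      ‖(1 / 2 : ℝ) • (u + v)‖ ≤ r * max ‖u‖ ‖v‖ := by
  obtain ⟨δ, hδ, hball⟩ := exists_forall_closed_ball_dist_add_le_two_sub E hε
  refine ⟨max 0 (1 - δ / 2), ⟨le_max_left _ _, max_lt one_pos (by linarith)⟩, fun u v huv ↦ ?_⟩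
  set M := max ‖u‖ ‖v‖
  have hM0 : 0 ≤ M := le_max_of_le_left (norm_nonneg u)
  obtain hM | hM := hM0.eq_or_lt
  · rw [← hM, mul_zero, norm_half_smul]
    linarith [norm_add_le u v, le_max_left ‖u‖ ‖v‖, le_max_right ‖u‖ ‖v‖]
  · have hscale (x : E) : ‖M⁻¹ • x‖ = ‖x‖ / M := by
      rw [norm_smul_of_nonneg (inv_nonneg.2 hM.le), inv_mul_eq_div]
    have hsum : ‖u + v‖ / M ≤ 2 - δ := by
      rw [← hscale, smul_add]
      refine hball ?_ ?_ ?_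
      · rw [hscale]
        exact div_le_one_of_le₀ (le_max_left _ _) hM.le
      · rw [hscale]
        exact div_le_one_of_le₀ (le_max_right _ _) hM.le
      · rwa [← smul_sub, hscale, le_div_iff₀ hM]
    calc ‖(1 / 2 : ℝ) • (u + v)‖ = ‖u + v‖ / M / 2 * M := by
          rw [norm_half_smul, div_right_comm, div_mul_cancel₀ _ hM.ne']
      _ ≤ max 0 (1 - δ / 2) * M := by
          gcongr
          exact le_max_of_le_right (by linarith)

theorem exists_norm_midpoint_rpow_le {p : ℝ} (hp : 1 < p) (hε : 0 < ε) :
    ∃ δ > (0 : ℝ), ∀ u v : E, ε * max ‖u‖ ‖v‖ ≤ ‖u - v‖ →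
      ‖(1 / 2 : ℝ) • (u + v)‖ ^ p ≤ (1 - δ) * ((‖u‖ ^ p + ‖v‖ ^ p) / 2) := by
  obtain ⟨r, hr, hmid⟩ := exists_norm_midpoint_le_mul_max E hε
  obtain ⟨δ, hδ, hgap⟩ := exists_min_midpoint_mul_max_rpow_le hp hr
  refine ⟨δ, hδ, fun u v huv ↦ ?_⟩
  have htri : ‖(1 / 2 : ℝ) • (u + v)‖ ≤ (‖u‖ + ‖v‖) / 2 := by
    rw [norm_half_smul]
    gcongr
    exact norm_add_le u v
  calc ‖(1 / 2 : ℝ) • (u + v)‖ ^ p ≤ min ((‖u‖ + ‖v‖) / 2) (r * max ‖u‖ ‖v‖) ^ p := by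
        gcongr
        exact le_min htri (hmid u v huv)
    _ ≤ (1 - δ) * ((‖u‖ ^ p + ‖v‖ ^ p) / 2) := hgap _ _ (norm_nonneg u) (norm_nonneg v)

end UniformConvexSpace

theorem stmt2_general {E : Type*} [AddCommGroup E] [Module ℝ E] (p : ℝ) (hp : 1 < p)
    (𝒩 : Seminorm ℝ E)
    (huc : ∀ ε ∈ Set.Ioc (0 : ℝ) 2, ∃ δ > (0 : ℝ), ∀ u v : E,
      𝒩 u = 1 → 𝒩 v = 1 → ε ≤ 𝒩 (u - v) →
      𝒩 ((1 / 2 : ℝ) • (u + v)) ≤ 1 - δ) :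
    ∀ ε > (0 : ℝ), ∃ δ' > (0 : ℝ), ∀ u v : E,
      ε * max (𝒩 u) (𝒩 v) ≤ 𝒩 (u - v) →
      𝒩 ((1 / 2 : ℝ) • (u + v)) ^ p ≤ (1 - δ') * ((𝒩 u ^ p + 𝒩 v ^ p) / 2) := by
  let : SeminormedAddCommGroup E := 𝒩.toAddGroupSeminorm.toSeminormedAddCommGroup
  let : NormedSpace ℝ E := { norm_smul_le c x := (map_smul_eq_mul 𝒩 c x).le }
  have : UniformConvexSpace E := uniformConvexSpace_of_norm_midpoint_le huc
  exact fun ε hε ↦ exists_norm_midpoint_rpow_le E hp hε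

theorem stmt2 {E : Type*} [AddCommGroup E] [Module ℝ E] (p : ℝ) (hp : 1 < p)
    (𝒩 : Seminorm ℝ E)
    (huc : ∀ ε ∈ Set.Ioc (0 : ℝ) 2, ∃ δ > (0 : ℝ), ∀ u v : E,
      𝒩 u = 1 → 𝒩 v = 1 → ε ≤ 𝒩 (u - v) →
      𝒩 ((1 / 2 : ℝ) • (u + v)) ≤ 1 - δ) :
    ∀ ε ∈ Set.Ioc (0 : ℝ) 2, ∃ δ' > (0 : ℝ), ∀ u v : E,
      𝒩 u ≤ 1 → 𝒩 v ≤ 1 → ε ≤ 𝒩 (u - v) →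
      (𝒩 ((1 / 2 : ℝ) • (u + v)) : ℝ) ^ p ≤ (1 - δ') * (((𝒩 u : ℝ) ^ p + (𝒩 v : ℝ) ^ p) / 2) := by
  intro ε hε
  obtain ⟨δ, hδ, h⟩ := stmt2_general p hp 𝒩 huc ε hε.1
  exact ⟨δ, hδ, fun u v hu hv huv ↦
    h u v ((mul_le_of_le_one_right hε.1.le (max_le hu hv)).trans huv)⟩
end

section
/- Let E be a real vector space, 1 < p < ∞, and let 𝒩₁ and 𝒩₂ be seminorms on E such that for each i ∈ {1,2} and every ε ∈ (0,2] there exists δ > 0 with the property: 𝒩ᵢ(u) ≤ 1, 𝒩ᵢ(v) ≤ 1 and 𝒩ᵢ(u − v) ≥ ε imply 𝒩ᵢ((u+v)/2)^p ≤ (1 − δ) · (𝒩ᵢ(u)^p + 𝒩ᵢ(v)^p)/2. Assume moreover that ‖u‖ := (𝒩₁(u)^p + 𝒩₂(u)^p)^{1/p} defines a norm on E (i.e. ‖u‖ = 0 only for u = 0). Then ‖·‖ is uniformly convex: for every ε ∈ (0,2] there exists δ > 0 such that ‖u‖ = ‖v‖ = 1 and ‖u − v‖ ≥ ε imply ‖(u+v)/2‖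 ≤ 1 − δ. -/
/-!
When `N (u - v)` is at least `ε`, one of `N u`, `N v` is at least `ε / 2`, so the relative gain
`1 - δ` in the convexity inequality for `N ^ p` is an absolute gain. If `u` and `v` are far apart
for the `ℓᵖ`-combination of finitely many seminorms, they are far apart for one of them, which
then contributes such an absolute gain; by convexity of `x ↦ x ^ p` the others lose nothing.
-/

section UniformConvexity

variable {E : Type*} [AddCommGroup E] [Module ℝ E] {p : ℝ}

/-- Uniform convexity of the `p`-th power of a seminorm on its unit ball: at `ε`-separated points,
the midpoint inequality for `N ^ p` improves by a factor `1 - δ`, with `δ` depending only on `ε`. -/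
def HasUniformlyConvexRPow (p : ℝ) (N : Seminorm ℝ E) : Prop :=
  ∀ ε ∈ Set.Ioc (0 : ℝ) 2, ∃ δ > (0 : ℝ), ∀ u v : E, N u ≤ 1 → N v ≤ 1 → ε ≤ N (u - v) →
    N ((1 / 2 : ℝ) • (u + v)) ^ p ≤ (1 - δ) * ((N u ^ p + N v ^ p) / 2)

theorem seminorm_rpow_midpoint_le (N : Seminorm ℝ E) (hp : 1 ≤ p) (u v : E) :
    N ((1 / 2 : ℝ) • (u + v)) ^ p ≤ (N u ^ p + N v ^ p) / 2 := by
  have hmid : N ((1 / 2 : ℝ) • (u + v)) ≤ (1 / 2 : ℝ) * N u + (1 / 2 : ℝ) * N v := by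
    rw [map_smul_eq_mul, Real.norm_of_nonneg (by norm_num), ← mul_add]
    gcongr
    exact map_add_le_add N u v
  calc N ((1 / 2 : ℝ) • (u + v)) ^ p
      ≤ ((1 / 2 : ℝ) * N u + (1 / 2 : ℝ) * N v) ^ p :=
        Real.rpow_le_rpow (apply_nonneg N _) hmid (by linarith)
    _ ≤ (1 / 2 : ℝ) * N u ^ p + (1 / 2 : ℝ) * N v ^ p :=
        (convexOn_rpow hp).2 (apply_nonneg N u) (apply_nonneg N v)
          (by norm_num) (by norm_num) (by norm_num)
    _ = (N u ^ p + N v ^ p) / 2 := by ring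

theorem half_rpow_le_seminorm_rpow_add_rpow (N : Seminorm ℝ E) (hp : 0 ≤ p) {ε : ℝ} (hε : 0 ≤ ε)
    {u v : E} (huv : ε ≤ N (u - v)) : (ε / 2) ^ p ≤ N u ^ p + N v ^ p := by
  have hu := Real.rpow_nonneg (apply_nonneg N u) p
  have hv := Real.rpow_nonneg (apply_nonneg N v) p
  have hsub : ε ≤ N u + N v := huv.trans (map_sub_le_add N u v)
  obtain hle | hle : ε / 2 ≤ N u ∨ ε / 2 ≤ N v := by
    by_contra! hlt
    linarith
  · linarith [Real.rpow_le_rpow (by positivity) hle hp]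
  · linarith [Real.rpow_le_rpow (by positivity) hle hp]

theorem HasUniformlyConvexRPow.exists_rpow_midpoint_le_sub {N : Seminorm ℝ E}
    (hN : HasUniformlyConvexRPow p N) (hp : 0 ≤ p) {ε : ℝ} (hε : ε ∈ Set.Ioc 0 2) :
    ∃ d > 0, ∀ u v : E, N u ≤ 1 → N v ≤ 1 → ε ≤ N (u - v) →
      N ((1 / 2 : ℝ) • (u + v)) ^ p ≤ (N u ^ p + N v ^ p) / 2 - d := by
  obtain ⟨δ, hδ, hconv⟩ := hN ε hε
  have hε0 : 0 < ε := hε.1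
  refine ⟨δ * ((ε / 2) ^ p / 2), by positivity, fun u v hu hv huv => ?_⟩
  calc N ((1 / 2 : ℝ) • (u + v)) ^ p
      ≤ (1 - δ) * ((N u ^ p + N v ^ p) / 2) := hconv u v hu hv huv
    _ = (N u ^ p + N v ^ p) / 2 - δ * ((N u ^ p + N v ^ p) / 2) := by ring
    _ ≤ (N u ^ p + N v ^ p) / 2 - δ * ((ε / 2) ^ p / 2) := by
        gcongr
        exact half_rpow_le_seminorm_rpow_add_rpow N hp hε0.le huv

theorem rpow_one_div_le_one_sub_div (hp : 1 ≤ p) {x d : ℝ} (hx : 0 ≤ x) (hxd : x ≤ 1 - d) :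
    x ^ (1 / p) ≤ 1 - d / p := by
  have hp0 : 0 < p := by linarith
  calc x ^ (1 / p) ≤ (1 + -d) ^ (1 / p) :=
        Real.rpow_le_rpow hx (by linarith) (by positivity)
    _ ≤ 1 + 1 / p * -d :=
        rpow_one_add_le_one_add_mul_self (by linarith) (by positivity) ((div_le_one hp0).2 hp)
    _ = 1 - d / p := by ring

section LpSum

variable {ι : Type*} [Fintype ι]

/-- The `ℓᵖ`-combination `u ↦ (∑ i, N i u ^ p) ^ (1 / p)` of a finite family of seminorms, as a
plain function: for `p < 1` it need not be a seminorm. -/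
noncomputable def lpSum (p : ℝ) (N : ι → Seminorm ℝ E) (u : E) : ℝ :=
  (∑ i, N i u ^ p) ^ (1 / p)

variable {N : ι → Seminorm ℝ E} {u v : E}

theorem sum_seminorm_rpow_nonneg (p : ℝ) (N : ι → Seminorm ℝ E) (u : E) :
    0 ≤ ∑ i, N i u ^ p :=
  Finset.sum_nonneg fun i _ => Real.rpow_nonneg (apply_nonneg (N i) u) p

theorem lpSum_eq_one_iff (hp : p ≠ 0) : lpSum p N u = 1 ↔ ∑ i, N i u ^ p = 1 := by
  rw [lpSum, one_div, Real.rpow_inv_eq (sum_seminorm_rpow_nonneg p N u) zero_le_one hp,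
    Real.one_rpow]

theorem seminorm_le_lpSum (hp : 0 < p) (i : ι) : N i u ≤ lpSum p N u := by
  rw [lpSum, one_div, Real.le_rpow_inv_iff_of_pos (apply_nonneg (N i) u)
    (sum_seminorm_rpow_nonneg p N u) hp]
  exact Finset.single_le_sum (f := fun j => N j u ^ p)
    (fun j _ => Real.rpow_nonneg (apply_nonneg (N j) u) p) (Finset.mem_univ i)

theorem exists_lpSum_div_card_rpow_le [Nonempty ι] (hp : 0 < p) (N : ι → Seminorm ℝ E) (u : E) :
    ∃ i, lpSum p N u / (Fintype.card ι : ℝ) ^ (1 / p) ≤ N i u := by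
  have hsum := sum_seminorm_rpow_nonneg p N u
  obtain ⟨i, -, hi⟩ : ∃ i ∈ Finset.univ, (∑ j, N j u ^ p) / Fintype.card ι ≤ N i u ^ p := by
    apply Finset.exists_le_of_sum_le Finset.univ_nonempty
    rw [Finset.sum_const, Finset.card_univ, nsmul_eq_mul, mul_div_cancel₀ _ (by simp)]
  refine ⟨i, ?_⟩
  rwa [lpSum, ← Real.div_rpow hsum (Nat.cast_nonneg _), one_div,
    Real.rpow_inv_le_iff_of_pos (by positivity) (apply_nonneg (N i) u) hp]

theorem sum_seminorm_rpow_midpoint_le_one_sub (hp : 1 ≤ p) (hu : ∑ i, N i u ^ p = 1)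
    (hv : ∑ i, N i v ^ p = 1) (i : ι) {d : ℝ}
    (hi : N i ((1 / 2 : ℝ) • (u + v)) ^ p ≤ (N i u ^ p + N i v ^ p) / 2 - d) :
    ∑ j, N j ((1 / 2 : ℝ) • (u + v)) ^ p ≤ 1 - d := by
  let gain j := (N j u ^ p + N j v ^ p) / 2 - N j ((1 / 2 : ℝ) • (u + v)) ^ p
  have hgain : d ≤ ∑ j, gain j := calc
    d ≤ gain i := le_sub_comm.1 hi
    _ ≤ ∑ j, gain j := Finset.single_le_sum
        (fun j _ => sub_nonneg.2 (seminorm_rpow_midpoint_le (N j) hp u v)) (Finset.mem_univ i)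
  have htotal : ∑ j, gain j = 1 - ∑ j, N j ((1 / 2 : ℝ) • (u + v)) ^ p := by
    rw [Finset.sum_sub_distrib, ← Finset.sum_div, Finset.sum_add_distrib, hu, hv]
    norm_num
  linarith

theorem stmt3_general (hp : 1 ≤ p) (N : ι → Seminorm ℝ E)
    (hN : ∀ i, HasUniformlyConvexRPow p (N i)) :
    ∀ ε ∈ Set.Ioc (0 : ℝ) 2, ∃ δ > (0 : ℝ), ∀ u v : E,
      lpSum p N u = 1 → lpSum p N v = 1 → ε ≤ lpSum p N (u - v) →
        lpSum p N ((1 / 2 : ℝ) • (u + v)) ≤ 1 - δ := by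
  intro ε ⟨hε0, hε2⟩
  have hp0 : 0 < p := by linarith
  obtain hι | hι := isEmpty_or_nonempty ι
  · exact ⟨1, one_pos, fun u v hu => by simp [lpSum_eq_one_iff hp0.ne'] at hu⟩
  have hcard : 1 ≤ (Fintype.card ι : ℝ) ^ (1 / p) :=
    Real.one_le_rpow (mod_cast Fintype.card_pos) (by positivity)
  have hscale : ε / (Fintype.card ι : ℝ) ^ (1 / p) ∈ Set.Ioc 0 2 :=
    ⟨by positivity, (div_le_self hε0.le hcard).trans hε2⟩
  choose d hd hmid using fun i => (hN i).exists_rpow_midpoint_le_sub hp0.le hscale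
  obtain ⟨m, hm, hmd⟩ := Pi.exists_forall_pos_add_lt hd
  refine ⟨m / p, by positivity, fun u v hu hv huv => ?_⟩
  obtain ⟨i, hi⟩ := exists_lpSum_div_card_rpow_le hp0 N (u - v)
  have hfar : ε / (Fintype.card ι : ℝ) ^ (1 / p) ≤ N i (u - v) := le_trans (by gcongr) hi
  have hmid_i := hmid i u v ((seminorm_le_lpSum hp0 i).trans_eq hu)
    ((seminorm_le_lpSum hp0 i).trans_eq hv) hfar
  rw [lpSum_eq_one_iff hp0.ne'] at hu hv
  exact rpow_one_div_le_one_sub_div hp (sum_seminorm_rpow_nonneg p N _)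
    (sum_seminorm_rpow_midpoint_le_one_sub hp hu hv i (by linarith [hmd i]))

end LpSum

end UniformConvexity

theorem stmt3 {E : Type*} [AddCommGroup E] [Module ℝ E] (p : ℝ) (hp : 1 < p)
    (𝒩₁ 𝒩₂ : Seminorm ℝ E)
    (h1 : ∀ ε ∈ Set.Ioc (0 : ℝ) 2, ∃ δ > (0 : ℝ), ∀ u v : E,
      𝒩₁ u ≤ 1 → 𝒩₁ v ≤ 1 → ε ≤ 𝒩₁ (u - v) →
      (𝒩₁ ((1 / 2 : ℝ) • (u + v)) : ℝ) ^ p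
        ≤ (1 - δ) * (((𝒩₁ u : ℝ) ^ p + (𝒩₁ v : ℝ) ^ p) / 2))
    (h2 : ∀ ε ∈ Set.Ioc (0 : ℝ) 2, ∃ δ > (0 : ℝ), ∀ u v : E,
      𝒩₂ u ≤ 1 → 𝒩₂ v ≤ 1 → ε ≤ 𝒩₂ (u - v) →
      (𝒩₂ ((1 / 2 : ℝ) • (u + v)) : ℝ) ^ p
        ≤ (1 - δ) * (((𝒩₂ u : ℝ) ^ p + (𝒩₂ v : ℝ) ^ p) / 2))
    (hnorm : ∀ u : E, ((𝒩₁ u : ℝ) ^ p + (𝒩₂ u : ℝ) ^ p) ^ (1 / p) = 0 → u = 0) :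
    ∀ ε ∈ Set.Ioc (0 : ℝ) 2, ∃ δ > (0 : ℝ), ∀ u v : E,
      ((𝒩₁ u : ℝ) ^ p + (𝒩₂ u : ℝ) ^ p) ^ (1 / p) = 1 →
      ((𝒩₁ v : ℝ) ^ p + (𝒩₂ v : ℝ) ^ p) ^ (1 / p) = 1 →
      ε ≤ ((𝒩₁ (u - v) : ℝ) ^ p + (𝒩₂ (u - v) : ℝ) ^ p) ^ (1 / p) →
      ((𝒩₁ ((1 / 2 : ℝ) • (u + v)) : ℝ) ^ p
          + (𝒩₂ ((1 / 2 : ℝ) • (u + v)) : ℝ) ^ p) ^ (1 / p) ≤ 1 - δ := by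
  simpa [lpSum, Fin.sum_univ_two] using
    stmt3_general hp.le ![𝒩₁, 𝒩₂] (Fin.forall_fin_two.2 ⟨h1, h2⟩)
end

section
/- Let p ≥ 1, μ ≥ 1, ν > 0 and k > 0 be real numbers. For t ≥ 0 define g_{μ,ν}(t) := t^μ · (min{t,k})^ν and G_{μ,ν}(t) := ∫₀^t (g_{μ,ν}'(τ))^{1/p} dτ (the derivative exists for τ ≠ k and G_{μ,ν} is given explicitly by G_{μ,ν}(t) = p(μ+ν)^{1/p}/(μ+ν+p−1) · t^{(μ+ν+p−1)/p} for t ≤ k, and G_{μ,ν}(t) = p(μ+ν)^{1/p}/(μ+ν+p−1) · k^{(μ+ν+p−1)/p} + k^{ν/p} · pμ^{1/p}/(μ+p−1) · (t^{(μ+p−1)/p} − k^{(μ+p−1)/p}) for t > k). Then for every t ≥ 0, G_{μ,ν}(t) ≥ p(μ+ν)^{1/p}/(μ+ν+p−1) · t^{(μ+p−1)/p} · (min{t,k})^{ν/p}. -/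
/-- The function `G_{μ,ν}(t) = ∫₀^t (g_{μ,ν}'(τ))^{1/p} dτ` for
`g_{μ,ν}(t) = t^μ (min{t,k})^ν`, given by its explicit piecewise formula. -/
noncomputable def Gmunu (p μ ν k t : ℝ) : ℝ :=
  if t ≤ k then
    p * (μ + ν) ^ (1 / p) / (μ + ν + p - 1) * t ^ ((μ + ν + p - 1) / p)
  else
    p * (μ + ν) ^ (1 / p) / (μ + ν + p - 1) * k ^ ((μ + ν + p - 1) / p)
      + k ^ (ν / p) * (p * μ ^ (1 / p) / (μ + p - 1))
        * (t ^ ((μ + p - 1) / p) - k ^ ((μ + p - 1) / p))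

/-! Put `c x = p x^(1/p) / (x + p - 1)`, `a = (μ + p - 1) / p`, `b = ν / p` and `m = min t k`.
Then `G_{μ,ν}(t)` exceeds `c (μ + ν) t^a m^b` by exactly `(c μ - c (μ + ν)) (t^a - m^a) m^b`, so
it is enough that `c` is antitone on `[1, ∞)`. With `s = 1/p`, `c x` is the ratio of `x^s` to its
tangent line `1 + s (x - 1)` at `1`; comparing its values at `1 ≤ x ≤ y` reduces to Bernoulli's
inequality for `(y / x)^s`. -/

open Set

/-- The constant `c` in `∫₀^t (x τ^(x-1))^(1/p) dτ = c t^((x+p-1)/p)`: it occurs in `Gmunu`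
at `x = μ + ν` on `t ≤ k` and at `x = μ` on `t > k`. -/
noncomputable def gmunuCoeff (p x : ℝ) : ℝ :=
  p * x ^ (1 / p) / (x + p - 1)

lemma antitoneOn_rpow_div_one_add_mul_sub_one {s : ℝ} (hs₀ : 0 ≤ s) (hs₁ : s ≤ 1) :
    AntitoneOn (fun x : ℝ ↦ x ^ s / (1 + s * (x - 1))) (Ici 1) := by
  intro x (hx : 1 ≤ x) y (hy : 1 ≤ y) hxy
  have hx₀ : 0 < x := by linarith
  have tangent_pos {z : ℝ} (hz : 1 ≤ z) : 0 < 1 + s * (z - 1) := by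
    linarith [mul_nonneg hs₀ (sub_nonneg.2 hz)]
  have tangent_le : 1 + s * (x - 1) ≤ x := by
    linarith [mul_le_of_le_one_left (sub_nonneg.2 hx) hs₁]
  have bernoulli : (y / x) ^ s ≤ 1 + s * ((y - x) / x) := by
    have hyx : y / x = 1 + (y - x) / x := by field_simp; ring
    have hnonneg : 0 ≤ (y - x) / x := div_nonneg (sub_nonneg.2 hxy) hx₀.le
    rw [hyx]
    exact rpow_one_add_le_one_add_mul_self (by linarith) hs₀ hs₁
  have key : (y / x) ^ s * (1 + s * (x - 1)) ≤ 1 + s * (y - 1) :=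
    calc (y / x) ^ s * (1 + s * (x - 1))
        ≤ (1 + s * ((y - x) / x)) * (1 + s * (x - 1)) :=
          mul_le_mul_of_nonneg_right bernoulli (tangent_pos hx).le
      _ = 1 + s * (x - 1) + s * ((y - x) / x) * (1 + s * (x - 1)) := by ring
      _ ≤ 1 + s * (x - 1) + s * ((y - x) / x) * x := by gcongr
      _ = 1 + s * (y - 1) := by field_simp; ring
  rw [Real.div_rpow (by linarith) hx₀.le, div_mul_eq_mul_div,
    div_le_iff₀ (Real.rpow_pos_of_pos hx₀ s)] at key
  exact (div_le_div_iff₀ (tangent_pos hy) (tangent_pos hx)).2 (by linarith)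

lemma gmunuCoeff_eq_rpow_div_one_add_mul_sub_one {p : ℝ} (hp : p ≠ 0) (x : ℝ) :
    gmunuCoeff p x = x ^ (1 / p) / (1 + 1 / p * (x - 1)) := by
  have hden : x + p - 1 = p * (1 + 1 / p * (x - 1)) := by field_simp; ring
  rw [gmunuCoeff, hden, mul_div_mul_left _ _ hp]

lemma antitoneOn_gmunuCoeff {p : ℝ} (hp : 1 ≤ p) : AntitoneOn (gmunuCoeff p) (Ici 1) := by
  have hp₀ : 0 < p := by linarith
  rw [funext (gmunuCoeff_eq_rpow_div_one_add_mul_sub_one hp₀.ne')]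
  exact antitoneOn_rpow_div_one_add_mul_sub_one (by positivity) ((div_le_one hp₀).2 hp)

lemma Gmunu_eq_gmunuCoeff_mul_add {p μ ν k t : ℝ} (hp : p ≠ 0) (hμν : μ + ν + p - 1 ≠ 0)
    (hk : 0 ≤ k) (ht : 0 ≤ t) :
    Gmunu p μ ν k t =
      gmunuCoeff p (μ + ν) * (t ^ ((μ + p - 1) / p) * min t k ^ (ν / p))
        + (gmunuCoeff p μ - gmunuCoeff p (μ + ν))
          * (t ^ ((μ + p - 1) / p) - min t k ^ ((μ + p - 1) / p)) * min t k ^ (ν / p) := by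
  have rpow_split {u : ℝ} (hu : 0 ≤ u) :
      u ^ ((μ + ν + p - 1) / p) = u ^ ((μ + p - 1) / p) * u ^ (ν / p) := by
    have hexp : (μ + ν + p - 1) / p = (μ + p - 1) / p + ν / p := by ring
    rw [hexp, Real.rpow_add' hu (hexp ▸ div_ne_zero hμν hp)]
  simp only [Gmunu, gmunuCoeff]
  split_ifs with h
  · rw [min_eq_left h, rpow_split ht]
    ring
  · rw [min_eq_right (not_le.1 h).le, rpow_split hk]
    ring

theorem stmt4 (p μ ν k : ℝ) (hp : 1 ≤ p) (hμ : 1 ≤ μ) (hν : 0 < ν) (hk : 0 < k) :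
    ∀ t ≥ (0 : ℝ),
      p * (μ + ν) ^ (1 / p) / (μ + ν + p - 1)
          * (t ^ ((μ + p - 1) / p) * (min t k) ^ (ν / p))
        ≤ Gmunu p μ ν k t := by
  intro t ht
  have hp₀ : 0 < p := by linarith
  have hm : 0 ≤ min t k := le_min ht hk.le
  have hcoeff : gmunuCoeff p (μ + ν) ≤ gmunuCoeff p μ :=
    antitoneOn_gmunuCoeff hp hμ (mem_Ici.2 (by linarith)) (by linarith)
  have hpow : min t k ^ ((μ + p - 1) / p) ≤ t ^ ((μ + p - 1) / p) :=
    Real.rpow_le_rpow hm (min_le_left t k) (div_nonneg (by linarith) hp₀.le)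
  rw [Gmunu_eq_gmunuCoeff_mul_add hp₀.ne' (by linarith) hk.le ht]
  exact le_add_of_nonneg_right <| mul_nonneg
    (mul_nonneg (sub_nonneg.2 hcoeff) (sub_nonneg.2 hpow)) (Real.rpow_nonneg hm _)
end

section
/- Let N ≥ 2 be an integer, 0 < s < 1, 1 < p with N > ps, p_s^* := Np/(N−ps), p < r < min{q, p_s^*}, β ∈ [0,∞), and suppose 0 < γ < γ_c := (r−p)(p_s^* + β(p_s^*−p))/((q−r)(p_s^*−p)). With D := p_s^* + β(p_s^*−p) + γ(p_s^*−q), s₁ := β(p_s^*−r)/D, s₂ := γ(p_s^*−r)/D and s₃ := (r + β(r−p) + γ(r−q))/D, one has (1/(1−s₂)) · ( p_s^* s₃ / p + s₁ ) > 1. -/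
/-! Put `A = P + β (P - p)`, where `P` stands for `p_s^*`. Then `D (1 - s₂) = A - γ (q - r)`, and
`(P s₃ / p + s₁) / (1 - s₂)` exceeds `1` by exactly
`((r - p) A - γ (q - r) (P - p)) / (p (A - γ (q - r)))`.
The condition `γ < γ_c` says that this numerator is positive; since `r - p ≤ P - p`, it also
makes the denominator positive. -/

/-- The threshold `γ_c`, with `P` in the role of the critical Sobolev exponent `p_s^*`. It is
meaningful for `r ≠ q` and `p ≠ P`; otherwise the division returns `0`. -/
noncomputable def criticalGamma (p q r P β : ℝ) : ℝ :=
  (r - p) * (P + β * (P - p)) / ((q - r) * (P - p))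

/-- The common denominator `D` of the exponents `s₁`, `s₂`, `s₃`, with `P` in the role of the
critical Sobolev exponent `p_s^*`. -/
def exponentDenom (p q P β γ : ℝ) : ℝ :=
  P + β * (P - p) + γ * (P - q)

section

variable {p q r P β γ : ℝ}

theorem lt_criticalGamma_iff (hrq : r < q) (hpP : p < P) :
    γ < criticalGamma p q r P β ↔
      γ * ((q - r) * (P - p)) < (r - p) * (P + β * (P - p)) :=
  lt_div_iff₀ (mul_pos (sub_pos.2 hrq) (sub_pos.2 hpP))

theorem mul_sub_lt_of_lt_criticalGamma (hrq : r < q) (hpP : p < P) (hrP : r ≤ P)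
    (hA : 0 ≤ P + β * (P - p)) (hγ : γ < criticalGamma p q r P β) :
    γ * (q - r) < P + β * (P - p) := by
  refine lt_of_mul_lt_mul_right ?_ (sub_nonneg.2 hpP.le)
  calc γ * (q - r) * (P - p) = γ * ((q - r) * (P - p)) := mul_assoc _ _ _
    _ < (r - p) * (P + β * (P - p)) := (lt_criticalGamma_iff hrq hpP).1 hγ
    _ ≤ (P - p) * (P + β * (P - p)) := by gcongr
    _ = (P + β * (P - p)) * (P - p) := mul_comm _ _

theorem add_mul_sub_nonneg (hP : 0 ≤ P) (hpP : p ≤ P) (hβ : 0 ≤ β) :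
    0 ≤ P + β * (P - p) :=
  add_nonneg hP (mul_nonneg hβ (sub_nonneg.2 hpP))

theorem exponentDenom_sub_mul (p q r P β γ : ℝ) :
    exponentDenom p q P β γ - γ * (P - r) = P + β * (P - p) - γ * (q - r) := by
  unfold exponentDenom
  ring

theorem exponentDenom_pos_of_lt_criticalGamma (hrq : r < q) (hpP : p < P) (hrP : r ≤ P)
    (hA : 0 ≤ P + β * (P - p)) (hγ0 : 0 ≤ γ) (hγ : γ < criticalGamma p q r P β) :
    0 < exponentDenom p q P β γ := by
  have hE := mul_sub_lt_of_lt_criticalGamma hrq hpP hrP hA hγ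
  have hγP : 0 ≤ γ * (P - r) := mul_nonneg hγ0 (sub_nonneg.2 hrP)
  linarith [exponentDenom_sub_mul p q r P β γ]

variable {s₁ s₂ s₃ : ℝ}

theorem exponent_ratio_sub_one (hp : p ≠ 0) (hD : exponentDenom p q P β γ ≠ 0)
    (hE : P + β * (P - p) - γ * (q - r) ≠ 0)
    (h1 : s₁ = β * (P - r) / exponentDenom p q P β γ)
    (h2 : s₂ = γ * (P - r) / exponentDenom p q P β γ)
    (h3 : s₃ = (r + β * (r - p) + γ * (r - q)) / exponentDenom p q P β γ) :
    1 / (1 - s₂) * (P * s₃ / p + s₁) - 1 =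
      ((r - p) * (P + β * (P - p)) - γ * ((q - r) * (P - p))) /
        (p * (P + β * (P - p) - γ * (q - r))) := by
  have h_one_sub : 1 - s₂ =
      (P + β * (P - p) - γ * (q - r)) / exponentDenom p q P β γ := by
    rw [h2, one_sub_div hD, exponentDenom_sub_mul]
  rw [h_one_sub, h1, h3]
  field_simp
  ring

theorem one_lt_exponent_ratio_iff (hp : 0 < p) (hrq : r < q) (hpP : p < P)
    (hD : exponentDenom p q P β γ ≠ 0) (hE : γ * (q - r) < P + β * (P - p))
    (h1 : s₁ = β * (P - r) / exponentDenom p q P β γ)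
    (h2 : s₂ = γ * (P - r) / exponentDenom p q P β γ)
    (h3 : s₃ = (r + β * (r - p) + γ * (r - q)) / exponentDenom p q P β γ) :
    1 < 1 / (1 - s₂) * (P * s₃ / p + s₁) ↔ γ < criticalGamma p q r P β := by
  have hE' : 0 < P + β * (P - p) - γ * (q - r) := sub_pos.2 hE
  rw [← sub_pos, exponent_ratio_sub_one hp.ne' hD hE'.ne' h1 h2 h3,
    div_pos_iff_of_pos_right (mul_pos hp hE'), sub_pos, lt_criticalGamma_iff hrq hpP]

theorem stmt10_general (hp : 0 < p) (hrq : r < q) (hpP : p < P) (hrP : r ≤ P)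
    (hA : 0 ≤ P + β * (P - p)) (hγ : γ < criticalGamma p q r P β)
    (hD : exponentDenom p q P β γ ≠ 0)
    (h1 : s₁ = β * (P - r) / exponentDenom p q P β γ)
    (h2 : s₂ = γ * (P - r) / exponentDenom p q P β γ)
    (h3 : s₃ = (r + β * (r - p) + γ * (r - q)) / exponentDenom p q P β γ) :
    1 < 1 / (1 - s₂) * (P * s₃ / p + s₁) :=
  have hE := mul_sub_lt_of_lt_criticalGamma hrq hpP hrP hA hγ
  (one_lt_exponent_ratio_iff hp hrq hpP hD hE h1 h2 h3).2 hγ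

end

theorem stmt10 (N : ℕ) (hN : 2 ≤ N) (s p q r β γ ps γc D s₁ s₂ s₃ : ℝ)
    (hs0 : 0 < s) (hs1 : s < 1) (hp : 1 < p) (hNps : p * s < N)
    (hps : ps = N * p / (N - p * s))
    (hpr : p < r) (hrq : r < q) (hrps : r < ps)
    (hβ : 0 ≤ β)
    (hγc : γc = (r - p) * (ps + β * (ps - p)) / ((q - r) * (ps - p)))
    (hγ0 : 0 < γ) (hγ : γ < γc)
    (hD : D = ps + β * (ps - p) + γ * (ps - q))
    (h1 : s₁ = β * (ps - r) / D)
    (h2 : s₂ = γ * (ps - r) / D)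
    (h3 : s₃ = (r + β * (r - p) + γ * (r - q)) / D) :
    1 < (1 / (1 - s₂)) * (ps * s₃ / p + s₁) := by
  subst hγc hD
  have hpps : p < ps := hpr.trans hrps
  have hA := add_mul_sub_nonneg (by linarith) hpps.le hβ
  have hD := exponentDenom_pos_of_lt_criticalGamma hrq hpps hrps.le hA hγ0.le hγ
  exact stmt10_general (one_pos.trans hp) hrq hpps hrps.le hA hγ hD.ne' h1 h2 h3
end

section
/- Let (X, ‖·‖_X) and (Y, ‖·‖_Y) be real Banach spaces and ι : X → Y an injective continuous linear map (a continuous embedding of X into Y). Let Φ : X → ℝ be continuously Fréchet differentiable with Φ(0) = 0. Assume there exist ρ, α > 0 and e ∈ X such that ‖ι(e)‖_Y > ρ, Φ(e) < α, and Φ(u) ≥ α for all u ∈ X with ‖ι(u)‖_Y = ρ. Define Γ := { γ ∈ C([0,1]; X) : γ(0) = 0, γ(1) = e } and c := inf_{γ ∈ Γ} max_{t ∈ [0,1]} Φ(γ(t)). Then for every positive integer n there exists uₙ ∈ X such that c ≤ Φ(uₙ) ≤ c + 1/n and ‖Φ'(uₙ)‖_{X'} ≤ 2/n, where ‖Φ'(uₙ)‖_{X'}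 is the operator norm of the Fréchet derivative of Φ at uₙ. -/
open unitInterval

open Filter Set Topology

/-!
By the intermediate value theorem every admissible path crosses the level `ρ`, so its maximum is
at least `α` and is not attained at the endpoints. Apply Ekeland's variational principle to
`γ ↦ max Φ ∘ γ` on the complete metric space of admissible paths. If the resulting path had
`‖Φ'‖ > δ` at all its maximum points, a partition of unity would provide a unit-bounded continuous
field of directions, vanishing at the endpoints, along which `Φ` decreases faster than `δ` at the
maximum points; a small move along it would contradict the choice of the path.
-/

section Ekeland

variable {E : Type*} {f : E → ℝ} {ε : ℝ}

section PseudoMetric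

variable [PseudoMetricSpace E]

/-- The points below `x` in Ekeland's preorder, in which `y` precedes `x` when passing from `x` to
`y` decreases `f` by at least `ε` times the distance travelled. -/
def ekelandSet (f : E → ℝ) (ε : ℝ) (x : E) : Set E :=
  {y | f y + ε * dist y x ≤ f x}

theorem self_mem_ekelandSet (x : E) : x ∈ ekelandSet f ε x := by
  simp [ekelandSet]

theorem ekelandSet_subset_of_mem (hε : 0 ≤ ε) {x y : E} (hy : y ∈ ekelandSet f ε x) :
    ekelandSet f ε y ⊆ ekelandSet f ε x := by
  intro z hz
  have htri : ε * dist z x ≤ ε * (dist z y + dist y x) := by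
    gcongr
    exact dist_triangle z y x
  simp only [ekelandSet, mem_ofPred_eq] at hy hz ⊢
  linarith

theorem isClosed_ekelandSet (hf : LowerSemicontinuous f) (x : E) :
    IsClosed (ekelandSet f ε x) :=
  (hf.add (g := fun y => ε * dist y x)
    (Continuous.lowerSemicontinuous (by fun_prop))).isClosed_preimage (f x)

theorem exists_mem_ekelandSet_forall_dist_le (hf : BddBelow (range f)) (hε : 0 < ε) {η : ℝ}
    (hη : 0 < η) (x : E) :
    ∃ z ∈ ekelandSet f ε x, ∀ y ∈ ekelandSet f ε z, dist y z ≤ η := by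
  obtain ⟨_, ⟨z, hz, rfl⟩, hz_lt⟩ :=
    exists_lt_of_csInf_lt (Nonempty.image f ⟨x, self_mem_ekelandSet (ε := ε) x⟩)
      (lt_add_of_pos_right _ (mul_pos hε hη))
  refine ⟨z, hz, fun y hy => ?_⟩
  have hinf : sInf (f '' ekelandSet f ε x) ≤ f y :=
    csInf_le (hf.mono (image_subset_range _ _))
      (mem_image_of_mem f (ekelandSet_subset_of_mem hε.le hz hy))
  have hy' : f y + ε * dist y z ≤ f z := hy
  exact le_of_mul_le_mul_left (by linarith) hε

end PseudoMetric

theorem exists_mem_ekelandSet_eq_singleton [MetricSpace E] [CompleteSpace E]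
    (hf : LowerSemicontinuous f) (hbdd : BddBelow (range f)) (hε : 0 < ε) (x₀ : E) :
    ∃ x ∈ ekelandSet f ε x₀, ekelandSet f ε x = {x} := by
  choose z hz hz_dist using fun (n : ℕ) (x : E) =>
    exists_mem_ekelandSet_forall_dist_le hbdd hε (Nat.one_div_pos_of_nat (α := ℝ) (n := n)) x
  let u : ℕ → E := fun n => Nat.rec (z 0 x₀) (fun n x => z (n + 1) x) n
  have hu_dist : ∀ n, ∀ y ∈ ekelandSet f ε (u n), dist y (u n) ≤ 1 / ((n : ℝ) + 1) := by
    rintro (_ | n)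
    exacts [hz_dist 0 x₀, hz_dist (n + 1) (u n)]
  have hanti : Antitone fun n => ekelandSet f ε (u n) :=
    antitone_nat_of_succ_le fun n => ekelandSet_subset_of_mem hε.le (hz (n + 1) (u n))
  have hu_mem : ∀ n m, n ≤ m → u m ∈ ekelandSet f ε (u n) := fun n m hnm =>
    hanti hnm (self_mem_ekelandSet (u m))
  have hlim := tendsto_one_div_add_atTop_nhds_zero_nat (𝕜 := ℝ)
  have hcauchy : CauchySeq u := cauchySeq_of_le_tendsto_0' _
    (fun n m hnm => dist_comm (u n) (u m) ▸ hu_dist n (u m) (hu_mem n m hnm)) hlim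
  obtain ⟨x, hx⟩ := cauchySeq_tendsto_of_complete hcauchy
  have hx_mem : ∀ n, x ∈ ekelandSet f ε (u n) := fun n =>
    (isClosed_ekelandSet hf (u n)).mem_of_tendsto hx
      ((eventually_ge_atTop n).mono fun m hnm => hu_mem n m hnm)
  refine ⟨x, ekelandSet_subset_of_mem hε.le (hz 0 x₀) (hx_mem 0), ?_⟩
  refine Subset.antisymm (fun y hy => ?_) (singleton_subset_iff.2 (self_mem_ekelandSet x))
  have hy_lim : Tendsto u atTop (𝓝 y) := tendsto_iff_dist_tendsto_zero.2 <|
    squeeze_zero (fun _ => dist_nonneg) (fun n => dist_comm y (u n) ▸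
      hu_dist n y (ekelandSet_subset_of_mem hε.le (hx_mem n) hy)) hlim
  exact tendsto_nhds_unique hy_lim hx

theorem ekeland_variational_principle [MetricSpace E] [CompleteSpace E]
    (hf : LowerSemicontinuous f) (hbdd : BddBelow (range f)) (hε : 0 < ε) (x₀ : E) :
    ∃ x, f x + ε * dist x x₀ ≤ f x₀ ∧ ∀ y ≠ x, f x < f y + ε * dist y x := by
  obtain ⟨x, hx, hsingle⟩ := exists_mem_ekelandSet_eq_singleton hf hbdd hε x₀
  refine ⟨x, hx, fun y hyx => ?_⟩
  have hy : y ∉ ekelandSet f ε x := by rwa [hsingle, mem_singleton_iff]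
  exact not_le.1 hy

end Ekeland

section Descent

variable {T X : Type*} [TopologicalSpace T] [NormedAddCommGroup X] [NormedSpace ℝ X]

theorem exists_norm_le_one_apply_lt_neg {L : StrongDual ℝ X} {δ : ℝ} (hδ : δ < ‖L‖) :
    ∃ w : X, ‖w‖ ≤ 1 ∧ L w < -δ := by
  obtain ⟨w, hw, hlt⟩ := L.exists_lt_apply_of_lt_opNorm hδ
  rcases lt_abs.1 (Real.norm_eq_abs (L w) ▸ hlt) with hpos | hneg
  · exact ⟨-w, by simpa using hw.le, by simpa using hpos⟩
  · exact ⟨w, hw.le, lt_neg_of_lt_neg hneg⟩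

theorem exists_continuousMap_apply_lt_neg [NormalSpace T] [ParacompactSpace T]
    {L : T → StrongDual ℝ X} (hL : Continuous L) {A K : Set T} (hA : IsClosed A)
    (hK : IsClosed K) (hAK : Disjoint A K) {δ : ℝ} (hδ : ∀ t ∈ A, δ < ‖L t‖) :
    ∃ v : C(T, X), (∀ t, ‖v t‖ ≤ 1) ∧ (∀ t ∈ K, v t = 0) ∧ ∀ t ∈ A, L t (v t) < -δ := by
  let F : T → Set X := fun t =>
    Metric.closedBall 0 1 ∩ (⋂ _ : t ∈ K, {0}) ∩ ⋂ _ : t ∈ A, {w | L t w < -δ}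
  have hF_mem : ∀ t w, w ∈ F t ↔ ‖w‖ ≤ 1 ∧ (t ∈ K → w = 0) ∧ (t ∈ A → L t w < -δ) := by
    simp [F, and_assoc]
  have hF_convex : ∀ t, Convex ℝ (F t) := fun t =>
    ((convex_closedBall 0 1).inter (convex_iInter fun _ => convex_singleton 0)).inter
      (convex_iInter fun _ => convex_halfSpace_lt (L t).isLinear (-δ))
  have hF_local : ∀ t, ∃ w, ∀ᶠ s in 𝓝 t, w ∈ F s := fun t => by
    by_cases ht : t ∈ A
    · obtain ⟨w, hw, hlt⟩ := exists_norm_le_one_apply_lt_neg (hδ t ht)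
      have hLw : Continuous fun s => L s w := by fun_prop
      refine ⟨w, ?_⟩
      filter_upwards [hK.isOpen_compl.mem_nhds (disjoint_left.1 hAK ht),
        hLw.continuousAt.eventually_lt continuousAt_const hlt] with s hsK hs
      exact (hF_mem s w).2 ⟨hw, fun h => absurd h hsK, fun _ => hs⟩
    · refine ⟨0, ?_⟩
      filter_upwards [hA.isOpen_compl.mem_nhds ht] with s hs
      exact (hF_mem s 0).2 ⟨by simp, fun _ => rfl, fun h => absurd h hs⟩
  simpa only [hF_mem, forall_and] using
    exists_continuous_forall_mem_convex_of_local_const hF_convex hF_local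

theorem eventually_add_smul_lt_of_hasStrictFDerivAt {f : X → ℝ} {L : StrongDual ℝ X} {x w : X}
    (hf : HasStrictFDerivAt f L x) {r : ℝ} (hr : L w < r) :
    ∀ᶠ p : ℝ × X × X in 𝓝[>] 0 ×ˢ 𝓝 (x, w), f (p.2.1 + p.1 • p.2.2) < f p.2.1 + r * p.1 := by
  obtain ⟨q, hwq, hqr⟩ := exists_between hr
  have hbase : Tendsto (fun p : ℝ × X × X => p.2.1) (𝓝[>] 0 ×ˢ 𝓝 (x, w)) (𝓝 x) :=
    continuousAt_fst.tendsto.comp tendsto_snd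
  have hdir : Tendsto (fun p : ℝ × X × X => p.2.2) (𝓝[>] 0 ×ˢ 𝓝 (x, w)) (𝓝 w) :=
    continuousAt_snd.tendsto.comp tendsto_snd
  have hstep : Tendsto (fun p : ℝ × X × X => p.1) (𝓝[>] 0 ×ˢ 𝓝 (x, w)) (𝓝[>] 0) := tendsto_fst
  have hmoved : Tendsto (fun p : ℝ × X × X => p.2.1 + p.1 • p.2.2) (𝓝[>] 0 ×ˢ 𝓝 (x, w)) (𝓝 x) := by
    simpa using hbase.add ((hstep.mono_right nhdsWithin_le_nhds).smul hdir)
  have hbound : (fun p : ℝ × X × X => p.2.1 + p.1 • p.2.2 - p.2.1)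
      =O[𝓝[>] 0 ×ˢ 𝓝 (x, w)] fun p => p.1 := by
    simpa using (Asymptotics.isBigO_refl (fun p : ℝ × X × X => p.1) _).smul (hdir.isBigO_one ℝ)
  have hrem := ((hf.isLittleO.comp_tendsto (hmoved.prodMk_nhds hbase)).trans_isBigO hbound).def
    (sub_pos.2 hqr)
  filter_upwards [hrem, hstep.eventually eventually_mem_nhdsWithin,
    hdir.eventually (L.continuous.continuousAt.eventually_lt continuousAt_const hwq)]
    with ⟨h, y, w'⟩ hrem_le hpos hLq
  replace hpos : 0 < h := hpos
  have hexpand : f (y + h • w') - f y - h * L w' ≤ (r - q) * h := by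
    simpa [abs_of_pos hpos] using (le_abs_self _).trans hrem_le
  have hslope : h * L w' < h * q := mul_lt_mul_of_pos_left hLq hpos
  linarith

theorem eventually_forall_add_smul_lt [CompactSpace T] {Φ : X → ℝ} (hΦ : Continuous Φ)
    (γ v : C(T, X)) {m r : ℝ} (hm : ∀ t, Φ (γ t) ≤ m) {Φ' : T → StrongDual ℝ X}
    (hΦ' : ∀ t, Φ (γ t) = m → HasStrictFDerivAt Φ (Φ' t) (γ t))
    (hr : ∀ t, Φ (γ t) = m → Φ' t (v t) < r) :
    ∀ᶠ h in 𝓝[>] (0 : ℝ), ∀ t, Φ (γ t + h • v t) < m + r * h := by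
  have hlocal : ∀ t ∈ univ, ∀ᶠ p : ℝ × T in 𝓝[>] 0 ×ˢ 𝓝 t,
      Φ (γ p.2 + p.1 • v p.2) < m + r * p.1 := by
    intro t _
    rcases (hm t).eq_or_lt with hmax | hlt
    · have hlim : Tendsto (fun p : ℝ × T => (p.1, γ p.2, v p.2)) (𝓝[>] 0 ×ˢ 𝓝 t)
          (𝓝[>] 0 ×ˢ 𝓝 (γ t, v t)) :=
        tendsto_id.prodMap ((map_continuous γ).prodMk (map_continuous v)).continuousAt
      filter_upwards [hlim.eventually
        (eventually_add_smul_lt_of_hasStrictFDerivAt (hΦ' t hmax) (hr t hmax))] with p hp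
      exact hp.trans_le (by gcongr; exact hm p.2)
    · have hcont : Continuous fun p : ℝ × T => Φ (γ p.2 + p.1 • v p.2) := by fun_prop
      have hcont' : Continuous fun p : ℝ × T => m + r * p.1 := by fun_prop
      have hnhds : ∀ᶠ p in 𝓝 ((0 : ℝ), t), Φ (γ p.2 + p.1 • v p.2) < m + r * p.1 :=
        hcont.continuousAt.eventually_lt hcont'.continuousAt (by simpa using hlt)
      rw [nhds_prod_eq] at hnhds
      exact hnhds.filter_mono (prod_mono_left _ nhdsWithin_le_nhds)
  have huniv := isCompact_univ.mem_prod_nhdsSet_of_forall hlocal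
  rw [nhdsSet_univ, ← principal_univ] at huniv
  simpa using eventually_prod_principal_iff.1 huniv

end Descent

section CompactMaximum

variable {T X : Type*} [TopologicalSpace T] [CompactSpace T] [TopologicalSpace X] {Φ : X → ℝ}

theorem bddAbove_range_comp_continuousMap (hΦ : Continuous Φ) (γ : C(T, X)) :
    BddAbove (range fun t => Φ (γ t)) :=
  (isCompact_range (hΦ.comp γ.continuous)).bddAbove

theorem exists_apply_eq_iSup_comp_continuousMap [Nonempty T] (hΦ : Continuous Φ) (γ : C(T, X)) :
    ∃ t, Φ (γ t) = ⨆ s, Φ (γ s) :=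
  (isCompact_range (hΦ.comp γ.continuous)).sSup_mem (range_nonempty _)

theorem lowerSemicontinuous_iSup_comp_continuousMap (hΦ : Continuous Φ) :
    LowerSemicontinuous fun γ : C(T, X) => ⨆ t, Φ (γ t) :=
  lowerSemicontinuous_ciSup (bddAbove_range_comp_continuousMap hΦ) fun t =>
    (hΦ.comp (continuous_eval_const t)).lowerSemicontinuous

end CompactMaximum

section Minimax

variable {T X : Type*} [TopologicalSpace T] [CompactSpace T] [T2Space T] [Nonempty T]
  [NormedAddCommGroup X] [NormedSpace ℝ X] {Φ : X → ℝ} {K : Set T} {δ : ℝ}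

theorem exists_eqOn_iSup_add_mul_dist_lt (hΦ : ContDiff ℝ 1 Φ) (hK : IsClosed K) (hδ : 0 ≤ δ)
    (γ : C(T, X)) (hγK : ∀ t ∈ K, Φ (γ t) ≠ ⨆ s, Φ (γ s))
    (hγδ : ∀ t, Φ (γ t) = ⨆ s, Φ (γ s) → δ < ‖fderiv ℝ Φ (γ t)‖) :
    ∃ γ' : C(T, X), EqOn γ' γ K ∧ (⨆ t, Φ (γ' t)) + δ * dist γ' γ < ⨆ t, Φ (γ t) := by
  have hcont : Continuous fun t => Φ (γ t) := hΦ.continuous.comp γ.continuous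
  obtain ⟨v, hv_norm, hv_zero, hv_descent⟩ := exists_continuousMap_apply_lt_neg
    ((hΦ.continuous_fderiv one_ne_zero).comp γ.continuous)
    (isClosed_eq hcont continuous_const) hK
    (disjoint_left.2 fun t hmax ht => hγK t ht hmax) hγδ
  obtain ⟨h, hlt, hpos : 0 < h⟩ := ((eventually_forall_add_smul_lt hΦ.continuous γ v
    (le_ciSup (bddAbove_range_comp_continuousMap hΦ.continuous γ))
    (fun _ _ => hΦ.contDiffAt.hasStrictFDerivAt one_ne_zero) hv_descent).and
    self_mem_nhdsWithin).exists
  refine ⟨γ + h • v, fun t ht => by simp [hv_zero t ht], ?_⟩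
  have hdist : dist (γ + h • v) γ ≤ h := by
    refine (ContinuousMap.dist_le hpos.le).2 fun t => ?_
    simpa [norm_smul, abs_of_pos hpos] using mul_le_of_le_one_right hpos.le (hv_norm t)
  obtain ⟨t, ht⟩ := exists_apply_eq_iSup_comp_continuousMap hΦ.continuous (γ + h • v)
  calc (⨆ s, Φ ((γ + h • v) s)) + δ * dist (γ + h • v) γ
      ≤ Φ (γ t + h • v t) + δ * h := by
        rw [← ht]
        gcongr
        rfl
    _ < ⨆ s, Φ (γ s) := by linarith [hlt t]

theorem exists_eqOn_norm_fderiv_le_of_apply_eq_iSup [CompleteSpace X] (hΦ : ContDiff ℝ 1 Φ)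
    (γ₀ : C(T, X)) (hK : IsClosed K) {α : ℝ} (hγ₀ : ∀ t ∈ K, Φ (γ₀ t) < α)
    (hα : ∀ γ : C(T, X), EqOn γ γ₀ K → α ≤ ⨆ t, Φ (γ t)) (hδ : 0 < δ) :
    ∃ γ : C(T, X), EqOn γ γ₀ K ∧ (⨆ t, Φ (γ t)) ≤ (⨆ t, Φ (γ₀ t)) ∧
      ∃ t, Φ (γ t) = (⨆ s, Φ (γ s)) ∧ ‖fderiv ℝ Φ (γ t)‖ ≤ δ := by
  let Γ : Set C(T, X) := {γ | EqOn γ γ₀ K}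
  have hΓ : IsClosed Γ := by
    simp only [Γ, EqOn, ofPred_forall]
    exact isClosed_biInter fun t _ => isClosed_eq (continuous_eval_const t) continuous_const
  have : CompleteSpace Γ := hΓ.completeSpace_coe
  obtain ⟨⟨γ, hγ⟩, hle, hmin⟩ := ekeland_variational_principle
    ((lowerSemicontinuous_iSup_comp_continuousMap hΦ.continuous).comp continuous_subtype_val)
    ⟨α, by rintro _ ⟨γ, rfl⟩; exact hα γ.1 γ.2⟩ hδ (⟨γ₀, eqOn_refl _ _⟩ : Γ)
  refine ⟨γ, hγ, (le_add_of_nonneg_right (by positivity)).trans hle, ?_⟩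
  by_contra! hnot
  obtain ⟨γ', hγ', hlt⟩ := exists_eqOn_iSup_add_mul_dist_lt hΦ hK hδ.le γ
    (fun t ht => hγ ht ▸ ((hγ₀ t ht).trans_le (hα γ hγ)).ne) hnot
  have hne : γ' ≠ γ := by
    rintro rfl
    simp at hlt
  exact lt_asymm hlt (hmin ⟨γ', hγ'.trans hγ⟩ (Subtype.coe_ne_coe.1 hne))

theorem exists_near_minimax_norm_fderiv_le [CompleteSpace X] (hΦ : ContDiff ℝ 1 Φ)
    (γ₀ : C(T, X)) (hK : IsClosed K) {α : ℝ} (hγ₀ : ∀ t ∈ K, Φ (γ₀ t) < α)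
    (hα : ∀ γ : C(T, X), EqOn γ γ₀ K → α ≤ ⨆ t, Φ (γ t)) {c : ℝ}
    (hc : c = sInf {m | ∃ γ : C(T, X), EqOn γ γ₀ K ∧ m = ⨆ t, Φ (γ t)})
    {ε : ℝ} (hε : 0 < ε) (hδ : 0 < δ) :
    ∃ u : X, c ≤ Φ u ∧ Φ u < c + ε ∧ ‖fderiv ℝ Φ u‖ ≤ δ := by
  subst hc
  let M : Set ℝ := {m | ∃ γ : C(T, X), EqOn γ γ₀ K ∧ m = ⨆ t, Φ (γ t)}
  have hM_nonempty : M.Nonempty := ⟨_, γ₀, eqOn_refl γ₀ K, rfl⟩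
  have hM_bdd : BddBelow M := ⟨α, by rintro _ ⟨γ, hγ, rfl⟩; exact hα γ hγ⟩
  obtain ⟨_, ⟨γ₁, hγ₁, rfl⟩, hlt⟩ :=
    exists_lt_of_csInf_lt hM_nonempty (lt_add_of_pos_right _ hε)
  obtain ⟨γ, hγ, hle, t, hmax, hderiv⟩ := exists_eqOn_norm_fderiv_le_of_apply_eq_iSup hΦ γ₁ hK
    (fun t ht => hγ₁ ht ▸ hγ₀ t ht) (fun γ hγ => hα γ (hγ.trans hγ₁)) hδ
  exact ⟨γ t, csInf_le hM_bdd ⟨γ, hγ.trans hγ₁, hmax⟩, hmax ▸ hle.trans_lt hlt, hderiv⟩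

end Minimax

theorem stmt13_general {X : Type*} [NormedAddCommGroup X] [NormedSpace ℝ X] [CompleteSpace X]
    {g Φ : X → ℝ} (hg : Continuous g) (hΦ : ContDiff ℝ 1 Φ) {a b : X} {ρ α : ℝ}
    (ha : g a ≤ ρ) (hb : ρ ≤ g b) (hΦa : Φ a < α) (hΦb : Φ b < α)
    (hmtn : ∀ u, g u = ρ → α ≤ Φ u) {c : ℝ}
    (hc : c = sInf {m : ℝ | ∃ γ : C(I, X), γ 0 = a ∧ γ 1 = b ∧ m = ⨆ t : I, Φ (γ t)})
    {ε δ : ℝ} (hε : 0 < ε) (hδ : 0 < δ) :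
    ∃ u : X, c ≤ Φ u ∧ Φ u < c + ε ∧ ‖fderiv ℝ Φ u‖ ≤ δ := by
  let γ₀ : C(I, X) := ⟨fun t => AffineMap.lineMap a b (t : ℝ), by fun_prop⟩
  have hγ₀0 : γ₀ 0 = a := by simp [γ₀]
  have hγ₀1 : γ₀ 1 = b := by simp [γ₀]
  have hΓ : ∀ γ : C(I, X), EqOn γ γ₀ {0, 1} ↔ γ 0 = a ∧ γ 1 = b := fun γ => by
    simp [EqOn, hγ₀0, hγ₀1]
  refine exists_near_minimax_norm_fderiv_le hΦ γ₀ (K := {0, 1}) (toFinite _).isClosed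
    (α := α) ?_ (fun γ hγ => ?_) (by simpa only [hΓ, and_assoc] using hc) hε hδ
  · simp [hγ₀0, hγ₀1, hΦa, hΦb]
  · obtain ⟨h0, h1⟩ := (hΓ γ).1 hγ
    obtain ⟨t, ht⟩ := mem_range_of_exists_le_of_exists_ge (hg.comp γ.continuous)
      ⟨0, by simpa [h0]⟩ ⟨1, by simpa [h1]⟩
    exact (hmtn (γ t) ht).trans (le_ciSup (bddAbove_range_comp_continuousMap hΦ.continuous γ) t)

theorem stmt13 {X Y : Type*}
    [NormedAddCommGroup X] [NormedSpace ℝ X] [CompleteSpace X]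
    [NormedAddCommGroup Y] [NormedSpace ℝ Y] [CompleteSpace Y]
    (ι : X →L[ℝ] Y) (hι : Function.Injective ι)
    (Φ : X → ℝ) (hΦ : ContDiff ℝ 1 Φ) (hΦ0 : Φ 0 = 0)
    (ρ α : ℝ) (hρ : 0 < ρ) (hα : 0 < α) (e : X)
    (he : ρ < ‖ι e‖) (hΦe : Φ e < α)
    (hmtn : ∀ u : X, ‖ι u‖ = ρ → α ≤ Φ u)
    (c : ℝ)
    (hc : c = sInf { m : ℝ | ∃ γ : C(unitInterval, X),
        γ 0 = 0 ∧ γ 1 = e ∧ m = ⨆ t : unitInterval, Φ (γ t) }) :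
    ∀ n : ℕ, 0 < n → ∃ u : X,
      c ≤ Φ u ∧ Φ u ≤ c + 1 / (n : ℝ) ∧ ‖fderiv ℝ Φ u‖ ≤ 2 / (n : ℝ) := by
  intro n hn
  obtain ⟨u, hcu, huc, hu⟩ := stmt13_general ι.continuous.norm hΦ (by simpa using hρ.le) he.le
    (hΦ0 ▸ hα) hΦe hmtn hc (ε := 1 / n) (δ := 2 / n) (by positivity) (by positivity)
  exact ⟨u, hcu, huc.le, hu⟩
end
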